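/- Let ψ be an approximation function with ψ(q) < 1/2 for all q, satisfying ψ(q) = O((q (log log q)²)⁻¹), and suppose ψ is weakly extra divergent. Then for every wildly Liouville irrational number γ, the set W(ψ,γ) has Lebesgue measure one. -/

import Mathlib

open MeasureTheory Filter Real

/-- Distance from a real number to the nearest integer. -/
noncomputable def dnint (x : ℝ) : ℝ := |x - round x|

/-- The inhomogeneous approximation set `W(ψ,γ)`. -/
noncomputable def W (ψ : ℕ → ℝ) (γ : ℝ) : Set ℝ :=
  {x ∈ Set.Icc (0:ℝ) 1 | {q : ℕ | 0 < q ∧ dnint (q * x - γ) < ψ q}.Infinite}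

/-- `σ_γ(Q)`: the infimum of all `σ > 0` with `‖qγ‖ ≥ q^{-σ}` for all `2 ≤ q ≤ Q`. -/
noncomputable def sigmaExp (γ : ℝ) (Q : ℕ) : ℝ :=
  sInf {σ : ℝ | 0 < σ ∧ ∀ q : ℕ, 2 ≤ q → q ≤ Q → (q : ℝ) ^ (-σ) ≤ dnint (q * γ)}

/-- `γ` is tamely Liouville if `σ_γ(Q) ≤ C (log₂ Q)^{1/4-ε}` for all `Q ≥ 2`. -/
def TamelyLiouville (γ : ℝ) : Prop :=
  ∃ ε > (0:ℝ), ∃ C > (0:ℝ), ∀ Q : ℕ, 2 ≤ Q →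
    sigmaExp γ Q ≤ C * (Real.logb 2 Q) ^ ((1:ℝ)/4 - ε)

/-- `ψ` is weakly extra divergent: `liminf_{Q→∞} ∑_{q=Q}^{⌊Q^{(log₂ Q)^{1/8}}⌋} ψ(q) = ∞`. -/
def WeaklyExtraDivergent (ψ : ℕ → ℝ) : Prop :=
  Tendsto (fun Q : ℕ =>
    ∑ q ∈ Finset.Icc Q ⌊(Q:ℝ) ^ ((Real.logb 2 Q) ^ ((1:ℝ)/8))⌋₊, ψ q) atTop atTop


/-- Number of integers in an open interval. -/
lemma card_int_le (s : Finset ℤ) (u w : ℝ) (hw : 0 ≤ w) (h : ∀ j ∈ s, |(j:ℝ) + u| < w) :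
    (s.card : ℝ) ≤ 2 * w + 1 := by
  have hsub : s ⊆ Finset.Icc (⌊-u-w⌋+1) (⌈-u+w⌉-1) := by
    intro j hj
    have := abs_lt.mp (h j hj)
    rw [Finset.mem_Icc]
    constructor
    · have : ⌊-u-w⌋ < j := by rw [Int.floor_lt]; linarith
      omega
    · have : j < ⌈-u+w⌉ := by rw [Int.lt_ceil]; linarith
      omega
  have h1 := Finset.card_le_card hsub
  rw [Int.card_Icc] at h1
  have h2 : (s.card : ℝ) ≤ (((⌈-u+w⌉-1 + 1 - (⌊-u-w⌋+1)).toNat : ℤ) : ℝ) := by exact_mod_cast h1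
  have a1 := Int.ceil_lt_add_one (-u+w)
  have a2 := Int.sub_one_lt_floor (-u-w)
  rcases le_total (⌈-u+w⌉-1 + 1 - (⌊-u-w⌋+1)) 0 with h0 | h0
  · rw [Int.toNat_of_nonpos h0] at h2
    push_cast at h2; linarith
  · rw [Int.toNat_of_nonneg h0] at h2
    push_cast at h2; linarith

def EE (γ : ℝ) (a : ℝ) (q : ℕ) : Set UnitAddCircle :=
  {x | ‖q • x - (γ : UnitAddCircle)‖ < a}

open Classical in
lemma card_shift (γ b : ℝ) (hb : 0 ≤ b) (q r : ℕ) (hq : 0 < q) (hr : 0 < r) (q' r' : ℕ)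
    (d : ℕ) (hd : 0 < d) (hq' : q = d * q') (hr' : r = d * r') (hc : Nat.Coprime q' r')
    (x : UnitAddCircle) :
    (((Finset.range q').filter (fun k : ℕ =>
      x + (((k : ℝ) / q : ℝ) : UnitAddCircle) ∈ EE γ b r)).card : ℝ) ≤ 2 * (b * q') + 1 := by
  obtain ⟨y, rfl⟩ := QuotientAddGroup.mk_surjective x
  have hq'0 : 0 < q' := by
    rcases Nat.eq_zero_or_pos q' with h | h
    · subst h; omega
    · exact h
  have hq'R : (0:ℝ) < q' := by exact_mod_cast hq'0
  have hdR : (0:ℝ) < d := by exact_mod_cast hd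
  let z : ℕ → ℝ := fun k => r * (y + k / q) - γ
  have hz : ∀ k : ℕ, (((y:ℝ) : UnitAddCircle) + (((k : ℝ) / q : ℝ) : UnitAddCircle) ∈ EE γ b r) ↔
      |z k - round (z k)| < b := by
    intro k
    rw [← UnitAddCircle.norm_eq]
    simp only [EE, Set.mem_ofPred_eq, z]
    rw [← AddCircle.coe_add, ← AddCircle.coe_nsmul, ← AddCircle.coe_sub, nsmul_eq_mul]
  let j : ℕ → ℤ := fun k => r' * k - q' * round (z k)
  set s := (Finset.range q').filter (fun k : ℕ =>
      ((y:ℝ) : UnitAddCircle) + (((k : ℝ) / q : ℝ) : UnitAddCircle) ∈ EE γ b r) with hs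
  have hinj : Set.InjOn j s := by
    intro k hk l hl hkl
    simp only [hs, Finset.coe_filter, Finset.mem_range, Set.mem_ofPred_eq] at hk hl
    have h1 : (q':ℤ) ∣ r' * ((k:ℤ) - l) := ⟨round (z k) - round (z l), by
      simp only [j] at hkl; linear_combination hkl⟩
    have h2 : (q':ℤ) ∣ (k:ℤ) - l :=
      (Int.isCoprime_iff_gcd_eq_one.mpr (by simpa using hc)).dvd_of_dvd_mul_left h1
    have h3 : (k:ℤ) - l = 0 := by
      apply Int.eq_zero_of_abs_lt_dvd h2
      rw [abs_lt]; constructor <;> omega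
    omega
  have h1 := card_int_le (s.image j) (q' * (r * y - γ)) (b * q') (by positivity) (by
    intro i hi
    obtain ⟨k, hk, rfl⟩ := Finset.mem_image.mp hi
    have h2 := (hz k).mp (Finset.mem_filter.mp hk).2
    have h3 : ((j k : ℤ) : ℝ) + q' * (r * y - γ) = q' * (z k - round (z k)) := by
      simp only [j, z]
      push_cast
      rw [hq', hr']
      push_cast
      field_simp
      ring
    rw [h3, abs_mul, abs_of_pos hq'R, mul_comm]
    exact mul_lt_mul_of_pos_right h2 hq'R)
  rwa [Finset.card_image_of_injOn hinj] at h1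

lemma EE_isOpen (γ a : ℝ) (q : ℕ) : IsOpen (EE γ a q) := by
  unfold EE
  exact isOpen_lt (by fun_prop) continuous_const

lemma mp_nsmul (q : ℕ) (hq : 0 < q) :
    MeasurePreserving (fun x : UnitAddCircle => q • x) volume volume := by
  have h := Measure.measurePreserving_zsmul (volume : Measure UnitAddCircle) (n := (q:ℤ)) (by omega)
  simpa using h

lemma EE_vol (γ a : ℝ) (ha : 0 ≤ a) (ha2 : a ≤ 1/2) (q : ℕ) (hq : 0 < q) :
    volume (EE γ a q) = ENNReal.ofReal (2 * a) := by
  have h : EE γ a q = (fun x : UnitAddCircle => q • x) ⁻¹' Metric.ball (γ : UnitAddCircle) a := by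
    ext x; simp [EE, dist_eq_norm]
  rw [h, (mp_nsmul q hq).measure_preimage (Metric.isOpen_ball.measurableSet.nullMeasurableSet),
    ← measure_congr AddCircle.closedBall_ae_eq_ball, AddCircle.volume_closedBall,
    min_eq_right (by linarith)]

lemma EE_inter (γ a b : ℝ) (ha : 0 ≤ a) (ha2 : a ≤ 1/2) (hb : 0 ≤ b) (q r : ℕ)
    (hq : 0 < q) (hr : 0 < r) :
    volume.real (EE γ a q ∩ EE γ b r) ≤ 2 * a * (2 * b + (Nat.gcd q r : ℝ) / q) := by
  classical
  obtain ⟨d, q', r', hd, hc, hq', hr'⟩ : ∃ d q' r' : ℕ, 0 < d ∧ Nat.Coprime q' r' ∧ q = d * q' ∧ r = d * r' := by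
    obtain ⟨q', r', hc, h1, h2⟩ := Nat.exists_coprime q r
    exact ⟨Nat.gcd q r, q', r', Nat.gcd_pos_of_pos_left _ hq, hc, by rw [mul_comm]; exact h1,
      by rw [mul_comm]; exact h2⟩
  have hgcd : Nat.gcd q r = d := by
    rw [hq', hr', Nat.gcd_mul_left, hc, mul_one]
  have hq'0 : 0 < q' := by
    rcases Nat.eq_zero_or_pos q' with h | h
    · subst h; omega
    · exact h
  have hq'R : (0:ℝ) < q' := by exact_mod_cast hq'0
  have hdR : (0:ℝ) < d := by exact_mod_cast hd
  have hqR : (0:ℝ) < q := by exact_mod_cast hq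
  set A := EE γ a q
  set B := EE γ b r
  let t : ℕ → UnitAddCircle := fun k => (((k : ℝ) / q : ℝ) : UnitAddCircle)
  have hA : MeasurableSet A := (EE_isOpen _ _ _).measurableSet
  have hB : MeasurableSet B := (EE_isOpen _ _ _).measurableSet
  have hqt : ∀ k, q • t k = 0 := by
    intro k
    simp only [t]
    rw [← AddCircle.coe_nsmul, nsmul_eq_mul, mul_div_cancel₀ _ hqR.ne']
    have := AddCircle.coe_nsmul (1:ℝ) (n := k) (x := (1:ℝ))
    rw [nsmul_one] at this
    rw [this, AddCircle.coe_period, smul_zero]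
  have hAt : ∀ k x, x + t k ∈ A ↔ x ∈ A := by
    intro k x
    simp only [A, EE, Set.mem_ofPred_eq, smul_add, hqt, add_zero]
  have hBk : ∀ k, MeasurableSet (A ∩ {x | x + t k ∈ B}) := fun k =>
    hA.inter (hB.preimage (measurable_add_const (t k)))
  have hk : ∀ k, volume (A ∩ B) = volume (A ∩ {x | x + t k ∈ B}) := by
    intro k
    have h := (measurePreserving_add_right (volume : Measure UnitAddCircle) (t k)).measure_preimage
      (hA.inter hB).nullMeasurableSet
    rw [← h]
    congr 1
    ext x
    simp [hAt]
  have hsum : (q' : ENNReal) * volume (A ∩ B) ≤ ENNReal.ofReal (2 * (b * q') + 1) * volume A := by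
    calc (q' : ENNReal) * volume (A ∩ B) = ∑ k ∈ Finset.range q', volume (A ∩ {x | x + t k ∈ B}) := by
          rw [← Finset.sum_congr rfl (fun k _ => hk k)]; simp
      _ = ∑ k ∈ Finset.range q', ∫⁻ x, (A ∩ {x | x + t k ∈ B}).indicator 1 x := by
          refine Finset.sum_congr rfl (fun k _ => ?_)
          rw [lintegral_indicator_one (hBk k)]
      _ = ∫⁻ x, ∑ k ∈ Finset.range q', (A ∩ {x | x + t k ∈ B}).indicator 1 x := by
          rw [lintegral_finsetSum]
          intro k _
          exact measurable_one.indicator (hBk k)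
      _ ≤ ∫⁻ x, A.indicator (fun _ => ENNReal.ofReal (2 * (b * q') + 1)) x := by
          apply lintegral_mono
          intro x
          by_cases hx : x ∈ A
          · have h1 : ∑ k ∈ Finset.range q', (A ∩ {x | x + t k ∈ B}).indicator (1 : UnitAddCircle → ENNReal) x
               = (((Finset.range q').filter (fun k : ℕ => x + t k ∈ B)).card : ENNReal) := by
              rw [Finset.card_filter]
              push_cast
              refine Finset.sum_congr rfl (fun k _ => ?_)
              simp [Set.indicator_apply, hx]
            simp only [h1]
            rw [Set.indicator_of_mem hx]
            have h2 := card_shift γ b hb q r hq hr q' r' d hd hq' hr' hc x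
            rw [← ENNReal.ofReal_natCast]
            exact ENNReal.ofReal_le_ofReal h2
          · simp [hx]
      _ = _ := by
          rw [lintegral_indicator_const hA]
  rw [EE_vol γ a ha ha2 q hq, ← ENNReal.ofReal_mul (by positivity)] at hsum
  have h3 := ENNReal.toReal_mono ENNReal.ofReal_ne_top hsum
  rw [ENNReal.toReal_mul, ENNReal.toReal_ofReal (by positivity)] at h3
  simp only [ENNReal.toReal_natCast] at h3
  change (q':ℝ) * volume.real (A ∩ B) ≤ _ at h3
  rw [hgcd, hq']
  push_cast
  have : 2 * a * (2 * b + (d:ℝ) / (d * q')) = ((2 * (b * q') + 1) * (2 * a)) / q' := by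
    field_simp
  rw [this, le_div_iff₀ hq'R]
  linarith

lemma EE_nonempty (γ a b : ℝ) (q r d q' r' : ℕ) (hq' : q = d * q') (hr' : r = d * r')
    (hr0 : 0 < r')
    (hne : (EE γ a q ∩ EE γ b r).Nonempty) :
    ‖((((r' : ℝ) - q') * γ : ℝ) : UnitAddCircle)‖ < r' * a + q' * b := by
  obtain ⟨x, h1, h2⟩ := hne
  obtain ⟨y, rfl⟩ := QuotientAddGroup.mk_surjective x
  simp only [EE, Set.mem_ofPred_eq] at h1 h2
  have hb : 0 < b := lt_of_le_of_lt (norm_nonneg _) h2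
  have key : ((((r' : ℝ) - q') * γ : ℝ) : UnitAddCircle)
      = q' • (r • (y : UnitAddCircle) - (γ : UnitAddCircle))
        - r' • (q • (y : UnitAddCircle) - (γ : UnitAddCircle)) := by
    rw [← AddCircle.coe_nsmul, ← AddCircle.coe_nsmul, ← AddCircle.coe_sub, ← AddCircle.coe_sub,
      ← AddCircle.coe_nsmul, ← AddCircle.coe_nsmul, ← AddCircle.coe_sub]
    congr 1
    simp only [nsmul_eq_mul, hq', hr']
    push_cast
    ring
  rw [key]
  have hrR : (0:ℝ) < r' := by exact_mod_cast hr0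
  refine (norm_sub_le _ _).trans_lt ?_
  have e1 := norm_nsmul_le (n := q') (a := r • (y : UnitAddCircle) - (γ : UnitAddCircle))
  have e2 := norm_nsmul_le (n := r') (a := q • (y : UnitAddCircle) - (γ : UnitAddCircle))
  have e3 : (r':ℝ) * ‖q • (y : UnitAddCircle) - (γ : UnitAddCircle)‖ < r' * a :=
    mul_lt_mul_of_pos_left h1 hrR
  have e4 : (q':ℝ) * ‖r • (y : UnitAddCircle) - (γ : UnitAddCircle)‖ ≤ q' * b :=
    mul_le_mul_of_nonneg_left h2.le (by positivity)
  linarith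

lemma second_moment {Ω : Type*} [MeasurableSpace Ω] (μ : Measure Ω) (hμ : μ Set.univ = 1)
    (s : Finset ℕ) (A : ℕ → Set Ω) (hA : ∀ i, MeasurableSet (A i)) (T R : ℝ)
    (hT : ∑ i ∈ s, μ.real (A i) = T)
    (hR : ∑ i ∈ s, ∑ j ∈ s, μ.real (A i ∩ A j) ≤ T ^ 2 + R) :
    μ.real (⋃ i ∈ s, A i)ᶜ * T ^ 2 ≤ R := by
  classical
  have : IsProbabilityMeasure μ := ⟨hμ⟩
  set U := ⋃ i ∈ s, A i with hU
  have hUm : MeasurableSet U := Finset.measurableSet_biUnion s (fun i _ => hA i)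
  let f : Ω → ℝ := fun x => ∑ i ∈ s, (A i).indicator (fun _ => (1:ℝ)) x
  have hind : ∀ B : Set Ω, MeasurableSet B → Integrable (B.indicator (fun _ => (1:ℝ))) μ :=
    fun B hB => (integrable_const 1).indicator hB
  have hindI : ∀ B : Set Ω, MeasurableSet B → ∫ x, B.indicator (fun _ => (1:ℝ)) x ∂μ = μ.real B := by
    intro B hB
    rw [integral_indicator_const _ hB]; simp
  have hf : Integrable f μ := integrable_finsetSum _ (fun i _ => hind _ (hA i))
  have hf2e : (fun x => f x ^ 2) = fun x => ∑ i ∈ s, ∑ j ∈ s, (A i ∩ A j).indicator (fun _ => (1:ℝ)) x := by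
    funext x
    simp only [f, sq, Finset.sum_mul_sum]
    refine Finset.sum_congr rfl (fun i _ => Finset.sum_congr rfl (fun j _ => ?_))
    by_cases h1 : x ∈ A i <;> by_cases h2 : x ∈ A j <;> simp [h1, h2]
  have hf2 : Integrable (fun x => f x ^ 2) μ := by
    rw [hf2e]
    exact integrable_finsetSum _ (fun i _ => integrable_finsetSum _ (fun j _ => hind _ ((hA i).inter (hA j))))
  have hfi : ∫ x, f x ∂μ = T := by
    rw [← hT, integral_finsetSum _ (fun i _ => hind _ (hA i))]
    exact Finset.sum_congr rfl (fun i _ => hindI _ (hA i))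
  have hf2i : ∫ x, f x ^ 2 ∂μ ≤ T ^ 2 + R := by
    refine le_trans (le_of_eq ?_) hR
    rw [hf2e, integral_finsetSum _ (fun i _ => integrable_finsetSum _ (fun j _ => hind _ ((hA i).inter (hA j))))]
    refine Finset.sum_congr rfl (fun i _ => ?_)
    rw [integral_finsetSum _ (fun j _ => hind _ ((hA i).inter (hA j)))]
    exact Finset.sum_congr rfl (fun j _ => hindI _ ((hA i).inter (hA j)))
  have hle : ∫ x, T ^ 2 * Uᶜ.indicator (fun _ => (1:ℝ)) x ∂μ ≤ ∫ x, (f x ^ 2 - 2 * T * f x + T ^ 2) ∂μ := by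
    apply integral_mono
    · exact (hind _ hUm.compl).const_mul _
    · exact (hf2.sub (hf.const_mul _)).add (integrable_const _)
    · intro x
      by_cases hx : x ∈ U
      · have h0 : Uᶜ.indicator (fun _ => (1:ℝ)) x = 0 :=
          Set.indicator_of_notMem (by simpa using hx) _
        simp only [h0]
        nlinarith [sq_nonneg (f x - T)]
      · have : f x = 0 := by
          apply Finset.sum_eq_zero
          intro i hi
          rw [Set.indicator_of_notMem]
          intro h
          exact hx (Set.mem_biUnion hi h)
        simp [this, hx]
  rw [integral_const_mul, hindI _ hUm.compl, integral_add, integral_sub hf2 (hf.const_mul _), integral_const_mul, hfi] at hle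
  · simp at hle
    nlinarith
  · exact hf2.sub (hf.const_mul _)
  · exact integrable_const _

lemma exists_eta (γ : ℝ) (hγ : Irrational γ) (n0 : ℕ) :
    ∃ η > (0:ℝ), ∀ n : ℕ, 0 < n → n < n0 → ∀ c : ℤ, η ≤ |n * γ - c| := by
  have hpos : ∀ n : ℕ, 0 < n → 0 < |(n:ℝ) * γ - round ((n:ℝ) * γ)| := by
    intro n hn
    rw [abs_pos, sub_ne_zero]
    exact (hγ.natCast_mul hn.ne').ne_int _
  induction n0 with
  | zero => exact ⟨1, one_pos, fun n _ h => by omega⟩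
  | succ k ih =>
    obtain ⟨η, h0, h⟩ := ih
    rcases Nat.eq_zero_or_pos k with hk | hk
    · exact ⟨1, one_pos, fun n _ h => by omega⟩
    · refine ⟨min η _, lt_min h0 (hpos k hk), fun n hn hnk c => ?_⟩
      rcases Nat.lt_succ_iff_lt_or_eq.mp hnk with h1 | h1
      · exact (min_le_left _ _).trans (h n hn h1 c)
      · subst h1
        exact (min_le_right _ _).trans (round_le _ _)

lemma wild_approx (γ : ℝ) (hγ : Irrational γ) (hwild : ¬ TamelyLiouville γ) (n0 : ℕ) :
    ∃ n : ℕ, n0 ≤ n ∧ 0 < n ∧ ∃ c : ℤ, IsCoprime c (n:ℤ) ∧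
      |n * γ - c| ≤ (n:ℝ) ^ (-(Real.logb 2 n) ^ ((1:ℝ)/5)) := by
  obtain ⟨η, hη, hmin⟩ := exists_eta γ hγ n0
  obtain ⟨k, hk⟩ := exists_pow_lt_of_lt_one hη (by norm_num : (1/2:ℝ) < 1)
  simp only [TamelyLiouville, not_exists, not_and, not_forall] at hwild
  obtain ⟨Q, hQ2, hQ⟩ := hwild (1/20) (by norm_num) (k+1) (by positivity)
  rw [not_le, show (1:ℝ)/4 - 1/20 = 1/5 by norm_num] at hQ
  have hlogQ : 1 ≤ Real.logb 2 Q := by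
    rw [Real.le_logb_iff_rpow_le (by norm_num) (by positivity)]
    simpa using (by exact_mod_cast hQ2 : (2:ℝ) ≤ Q)
  have hLQ : 1 ≤ (Real.logb 2 Q) ^ ((1:ℝ)/5) := Real.one_le_rpow hlogQ (by norm_num)
  set σ := ((k:ℝ)+1) * (Real.logb 2 Q) ^ ((1:ℝ)/5) with hσ
  have hσk : (k:ℝ) + 1 ≤ σ := by
    rw [hσ]; exact le_mul_of_one_le_right (by positivity) hLQ
  have hσpos : 0 < σ := by positivity
  have hσL : (Real.logb 2 Q) ^ ((1:ℝ)/5) ≤ σ := by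
    rw [hσ]; exact le_mul_of_one_le_left (by positivity) (by linarith [(Nat.cast_nonneg k : (0:ℝ) ≤ k)])
  obtain ⟨q, hq2, hqQ, hq⟩ : ∃ q : ℕ, 2 ≤ q ∧ q ≤ Q ∧ dnint (q * γ) < (q:ℝ) ^ (-σ) := by
    by_contra hcon
    push Not at hcon
    have : sigmaExp γ Q ≤ σ := csInf_le ⟨0, fun x hx => hx.1.le⟩ ⟨hσpos, hcon⟩
    linarith
  have hq1R : (1:ℝ) ≤ q := by exact_mod_cast (by omega : 1 ≤ q)
  have hq2R : (2:ℝ) ≤ q := by exact_mod_cast hq2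
  set c0 := round ((q:ℝ) * γ) with hc0
  have hg0 : 0 < Int.gcd c0 q := Int.gcd_pos_of_ne_zero_right _ (by omega)
  obtain ⟨g, n, c, hg, hcop, hqn, hcc⟩ : ∃ (g n : ℕ) (c : ℤ), 0 < g ∧ IsCoprime c (n:ℤ) ∧ q = g * n ∧ c0 = g * c := by
    obtain ⟨a, ha⟩ := Int.gcd_dvd_left c0 q
    obtain ⟨b, hb⟩ := Int.gcd_dvd_right c0 q
    have hbpos : 0 < b := by
      by_contra h
      have : (Int.gcd c0 q : ℤ) * b ≤ 0 := mul_nonpos_of_nonneg_of_nonpos (by positivity) (by omega)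
      omega
    lift b to ℕ using hbpos.le
    refine ⟨Int.gcd c0 q, b, a, hg0, ?_, by exact_mod_cast hb, ha⟩
    rw [Int.isCoprime_iff_gcd_eq_one]
    have h1 : Int.gcd c0 q = Int.gcd c0 q * Int.gcd a b := by
      have h2 := Int.gcd_mul_left (Int.gcd c0 q : ℤ) a b
      rw [← ha, ← hb] at h2
      simpa using h2
    exact Nat.eq_of_mul_eq_mul_left hg0 (by rw [← h1, mul_one])
  have hn0 : 0 < n := by
    rcases Nat.eq_zero_or_pos n with h | h
    · subst h; omega
    · exact h
  have hnq : n ≤ q := by rw [hqn]; exact Nat.le_mul_of_pos_left _ hg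
  have hsmall : |(n:ℝ) * γ - c| < (q:ℝ) ^ (-σ) := by
    have h1 : (q:ℝ) * γ - c0 = g * (n * γ - c) := by
      rw [hcc, hqn]; push_cast; ring
    have h2 : dnint (q * γ) = g * |(n:ℝ) * γ - c| := by
      unfold dnint; rw [← hc0, h1, abs_mul, abs_of_nonneg (by positivity)]
    have h3 : |(n:ℝ) * γ - c| ≤ g * |(n:ℝ) * γ - c| :=
      le_mul_of_one_le_left (abs_nonneg _) (by exact_mod_cast hg)
    linarith
  refine ⟨n, ?_, hn0, c, hcop, ?_⟩
  · by_contra hlt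
    have h1 := hmin n hn0 (by omega) c
    have h2 : (q:ℝ) ^ (-σ) ≤ (1/2) ^ k := by
      calc (q:ℝ) ^ (-σ) ≤ (q:ℝ) ^ (-(k:ℝ)) := Real.rpow_le_rpow_of_exponent_le hq1R (by linarith)
        _ ≤ (2:ℝ) ^ (-(k:ℝ)) := Real.rpow_le_rpow_of_nonpos (by norm_num) hq2R (by simp)
        _ = (1/2) ^ k := by rw [Real.rpow_neg (by norm_num), Real.rpow_natCast]; simp
    linarith
  · have hn1R : (1:ℝ) ≤ n := by exact_mod_cast hn0
    have hnQ : (n:ℝ) ≤ Q := by exact_mod_cast hnq.trans hqQ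
    have h0 : 0 ≤ Real.logb 2 n := Real.logb_nonneg (by norm_num) hn1R
    have h1 : Real.logb 2 n ≤ Real.logb 2 Q := Real.logb_le_logb_of_le (by norm_num) (by linarith) hnQ
    have h2 : (Real.logb 2 n) ^ ((1:ℝ)/5) ≤ σ :=
      (Real.rpow_le_rpow h0 h1 (by norm_num)).trans hσL
    refine hsmall.le.trans ?_
    calc (q:ℝ) ^ (-σ) ≤ (n:ℝ) ^ (-σ) :=
          Real.rpow_le_rpow_of_nonpos (by linarith) (by exact_mod_cast hnq) (by linarith)
      _ ≤ _ := Real.rpow_le_rpow_of_exponent_le hn1R (by linarith)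

lemma card_congr_le (F : Finset ℕ) (n : ℕ) (hn : 0 < n) (Z : ℝ) (hZ0 : 0 ≤ Z) (hZ : ∀ q ∈ F, (q:ℝ) ≤ Z)
    (hF : ∀ q ∈ F, ∀ p ∈ F, (n:ℤ) ∣ (q:ℤ) - p) : (F.card : ℝ) ≤ Z / n + 1 := by
  have h1 : F.card ≤ (Finset.range (⌊Z⌋₊ / n + 1)).card := by
    apply Finset.card_le_card_of_injOn (fun q => q / n)
    · intro q hq
      simp only [Finset.coe_range, Set.mem_Iio]
      exact Nat.lt_succ_of_le (Nat.div_le_div_right (Nat.le_floor (hZ q hq)))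
    · intro q hq p hp hqp
      simp only at hqp
      have h2 := hF q hq p hp
      have h3 : p ≡ q [MOD n] := (Nat.modEq_iff_dvd).mpr h2
      rw [← Nat.div_add_mod q n, ← Nat.div_add_mod p n, hqp, h3]
  rw [Finset.card_range] at h1
  have h2 : (F.card : ℝ) ≤ ((⌊Z⌋₊ / n : ℕ) : ℝ) + 1 := by exact_mod_cast h1
  have h3 : ((⌊Z⌋₊ / n : ℕ) : ℝ) ≤ (⌊Z⌋₊ : ℝ) / n := Nat.cast_div_le
  have h4 : (⌊Z⌋₊ : ℝ) / n ≤ Z / n := by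
    gcongr; exact Nat.floor_le hZ0
  linarith

lemma card_dvd_le (F : Finset ℕ) (n r : ℕ) (hn : 0 < n) (hZ : ∀ q ∈ F, 1 ≤ q ∧ q < r)
    (hF : ∀ q ∈ F, (n:ℤ) ∣ (r:ℤ) - q) : (F.card : ℝ) ≤ (r:ℝ) / n := by
  have hF' : ∀ q ∈ F, n ∣ r - q := by
    intro q hq
    have := hF q hq
    rw [← Nat.cast_sub (hZ q hq).2.le] at this
    exact_mod_cast this
  have h1 : F.card ≤ (Finset.Icc 1 (r / n)).card := by
    apply Finset.card_le_card_of_injOn (fun q => (r - q) / n)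
    · intro q hq
      simp only [Finset.coe_Icc, Set.mem_Icc]
      have h := hZ q hq
      exact ⟨Nat.div_pos (Nat.le_of_dvd (by omega) (hF' q hq)) hn, Nat.div_le_div_right (by omega)⟩
    · intro q hq p hp hqp
      simp only at hqp
      have e1 := Nat.div_mul_cancel (hF' q hq)
      have e2 := Nat.div_mul_cancel (hF' p hp)
      rw [hqp, e2] at e1
      have := hZ q hq
      have := hZ p hp
      omega
  rw [Nat.card_Icc, Nat.add_sub_cancel] at h1
  have h2 : (F.card : ℝ) ≤ ((r / n : ℕ) : ℝ) := by exact_mod_cast h1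
  exact h2.trans Nat.cast_div_le

lemma count_bad (γ : ℝ) (n : ℕ) (hn : 0 < n) (c : ℤ) (hcop : IsCoprime c (n:ℤ)) (r : ℕ) (hr : 0 < r)
    (Y : ℝ) (hY : 0 < Y) (he : r * (|n * γ - c| / n) ≤ Y / r)
    (hB : 1 < 2 * Y * n → n ^ 2 ≤ r)
    (s : Finset ℕ) (hs : ∀ q ∈ s, 1 ≤ q ∧ q < r ∧ ∃ k : ℤ, |((r:ℝ) - q) * γ - k| < Y / q) :
    (s.card : ℝ) ≤ 3 * (r / n) + 2 / n * ∑ j ∈ Finset.Icc 1 n, min (r:ℝ) (2 * Y * n / j) := by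
  classical
  have hnR : (0:ℝ) < n := by exact_mod_cast hn
  have hrR : (0:ℝ) < r := by exact_mod_cast hr
  let t : ℕ → ℤ := fun q => ((r:ℤ) - q) * c - n * round (((r:ℝ) - q) * c / n)
  have ht : ∀ q, ((t q : ℤ) : ℝ) = n * (((r:ℝ) - q) * c / n - round (((r:ℝ) - q) * c / n)) := by
    intro q; simp only [t]; push_cast; field_simp
  have htn : ∀ q, |t q| ≤ n := by
    intro q
    have h1 : |((t q : ℤ) : ℝ)| ≤ n := by
      rw [ht, abs_mul, abs_of_pos hnR]
      have := abs_sub_round (((r:ℝ) - q) * c / n)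
      nlinarith
    exact_mod_cast h1
  have htq : ∀ q ∈ s, (|t q| : ℝ) * q < 2 * Y * n := by
    intro q hq
    obtain ⟨h1, h2, k, hk⟩ := hs q hq
    have hqR : (0:ℝ) < q := by exact_mod_cast h1
    have hqr : (q:ℝ) < r := by exact_mod_cast h2
    have e1 : |((t q : ℤ) : ℝ)| = n * |((r:ℝ) - q) * c / n - round (((r:ℝ) - q) * c / n)| := by
      rw [ht, abs_mul, abs_of_pos hnR]
    have e2 := round_le (((r:ℝ) - q) * c / n) k
    have e3 : |((r:ℝ) - q) * c / n - k| ≤ |((r:ℝ) - q) * γ - k| + |((r:ℝ) - q) * (c / n - γ)| := by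
      refine le_trans (le_of_eq ?_) (abs_add_le _ _)
      congr 1; ring
    have e4 : |((r:ℝ) - q) * (c / n - γ)| ≤ Y / r := by
      refine le_trans ?_ he
      have : (c:ℝ) / n - γ = -(n * γ - c) / n := by field_simp; ring
      rw [this, abs_mul, abs_div, abs_neg, abs_of_pos hnR, abs_of_pos (by linarith : (0:ℝ) < r - q)]
      gcongr
      linarith
    have e5 : Y / r ≤ Y / q := by gcongr
    have e6 : |((t q : ℤ) : ℝ)| < n * (2 * Y / q) := by
      rw [e1]
      apply mul_lt_mul_of_pos_left _ hnR
      have : 2 * Y / (q:ℝ) = Y / q + Y / q := by ring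
      linarith
    calc |((t q : ℤ) : ℝ)| * q < n * (2 * Y / q) * q := mul_lt_mul_of_pos_right e6 hqR
      _ = 2 * Y * n := by field_simp
  let A := s.filter (fun q => t q = 0)
  have hA : (A.card : ℝ) ≤ r / n := by
    apply card_dvd_le A n r hn
    · intro q hq
      have := hs q (Finset.mem_filter.mp hq).1
      exact ⟨this.1, this.2.1⟩
    · intro q hq
      have h0 : t q = 0 := (Finset.mem_filter.mp hq).2
      have h1 : (n:ℤ) ∣ ((r:ℤ) - q) * c := ⟨round (((r:ℝ) - q) * c / n), by simp only [t] at h0; linarith⟩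
      exact hcop.symm.dvd_of_dvd_mul_right h1
  have hsum0 : 0 ≤ 2 / (n:ℝ) * ∑ j ∈ Finset.Icc 1 n, min (r:ℝ) (2 * Y * n / j) := by
    apply mul_nonneg (by positivity)
    apply Finset.sum_nonneg
    intro j _
    apply le_min <;> positivity
  by_cases hX : 1 < 2 * Y * n
  · have hrn := hB hX
    have hrnR : (n:ℝ) ≤ r / n := by
      rw [le_div_iff₀ hnR, ← sq]; exact_mod_cast hrn
    let Bp : ℤ → Finset ℕ := fun j => s.filter (fun q => t q = j)
    have hBp : ∀ j : ℕ, 1 ≤ j → ∀ i : ℤ, |i| = j → ((Bp i).card : ℝ) ≤ min (r:ℝ) (2 * Y * n / j) / n + 1 := by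
      intro j hj i hi
      have hjR : (0:ℝ) < j := by exact_mod_cast hj
      apply card_congr_le _ n hn _ (le_min hrR.le (by positivity))
      · intro q hq
        obtain ⟨h1, h2⟩ := Finset.mem_filter.mp hq
        apply le_min
        · exact_mod_cast (hs q h1).2.1.le
        · rw [le_div_iff₀ hjR]
          have := htq q h1
          rw [h2] at this
          have e : |(i:ℝ)| = j := by exact_mod_cast hi
          rw [e] at this
          linarith
      · intro q hq p hp
        have h2 : t q = i := (Finset.mem_filter.mp hq).2
        have h3 : t p = i := (Finset.mem_filter.mp hp).2
        have h4 : (n:ℤ) ∣ ((q:ℤ) - p) * c :=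
          ⟨round (((r:ℝ) - p) * c / n) - round (((r:ℝ) - q) * c / n), by
            simp only [t] at h2 h3; linear_combination h3 - h2⟩
        exact hcop.symm.dvd_of_dvd_mul_right h4
    have hsub : s ⊆ A ∪ (Finset.Icc 1 n).biUnion (fun j : ℕ => Bp j ∪ Bp (-j)) := by
      intro q hq
      by_cases h0 : t q = 0
      · exact Finset.mem_union_left _ (Finset.mem_filter.mpr ⟨hq, h0⟩)
      · apply Finset.mem_union_right
        rw [Finset.mem_biUnion]
        have h1 := abs_le.mp (htn q)
        refine ⟨(t q).natAbs, ?_, ?_⟩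
        · rw [Finset.mem_Icc]; omega
        · rw [Finset.mem_union]
          rcases le_total 0 (t q) with h | h
          · left; exact Finset.mem_filter.mpr ⟨hq, by omega⟩
          · right; exact Finset.mem_filter.mpr ⟨hq, by omega⟩
    have hc1 : (s.card : ℝ) ≤ A.card + ∑ j ∈ Finset.Icc 1 n, ((Bp j).card + (Bp (-j)).card : ℝ) := by
      have h1 := (Finset.card_le_card hsub).trans (Finset.card_union_le _ _)
      have h2 : ((Finset.Icc 1 n).biUnion (fun j : ℕ => Bp j ∪ Bp (-j))).card
          ≤ ∑ j ∈ Finset.Icc 1 n, ((Bp j).card + (Bp (-j)).card) :=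
        Finset.card_biUnion_le.trans (Finset.sum_le_sum fun j _ => Finset.card_union_le _ _)
      have := h1.trans (Nat.add_le_add_left h2 _)
      exact_mod_cast this
    have hc2 : ∑ j ∈ Finset.Icc 1 n, ((Bp j).card + (Bp (-j)).card : ℝ)
        ≤ ∑ j ∈ Finset.Icc 1 n, (2 / n * min (r:ℝ) (2 * Y * n / j) + 2) := by
      apply Finset.sum_le_sum
      intro j hj
      have hj1 := (Finset.mem_Icc.mp hj).1
      have e1 := hBp j hj1 j (by simp)
      have e2 := hBp j hj1 (-j) (by simp)
      have e3 : 2 / (n:ℝ) * min (r:ℝ) (2 * Y * n / j) = 2 * (min (r:ℝ) (2 * Y * n / j) / n) := by ring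
      linarith
    have hc3 : ∑ j ∈ Finset.Icc 1 n, (2 / n * min (r:ℝ) (2 * Y * n / j) + 2)
        = 2 / n * (∑ j ∈ Finset.Icc 1 n, min (r:ℝ) (2 * Y * n / j)) + n * 2 := by
      rw [Finset.sum_add_distrib, ← Finset.mul_sum]
      simp
    linarith
  · have hsA : s ⊆ A := by
      intro q hq
      refine Finset.mem_filter.mpr ⟨hq, ?_⟩
      by_contra h0
      have h1 := htq q hq
      have h2 : (1:ℝ) ≤ |((t q : ℤ):ℝ)| := by
        exact_mod_cast Int.one_le_abs h0
      have h3 : (1:ℝ) ≤ q := by exact_mod_cast (hs q hq).1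
      nlinarith
    have h1 : (s.card:ℝ) ≤ A.card := by exact_mod_cast Finset.card_le_card hsA
    have : (0:ℝ) ≤ r / n := by positivity
    linarith

lemma sum_min_le (n : ℕ) (hn : 0 < n) (M a : ℝ) (hM : 1 ≤ M) (ha : 0 ≤ a) (r : ℝ) (hr : 0 ≤ r) :
    ∑ j ∈ Finset.Icc 1 n, min r (a * n * r / j) ≤ r * n * (1 / M + a * (1 + Real.log M)) := by
  have hnR : (0:ℝ) < n := by exact_mod_cast hn
  set k := ⌊(n:ℝ) / M⌋₊ with hk
  have hkn : k ≤ n := by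
    have : (k:ℝ) ≤ n := (Nat.floor_le (by positivity)).trans (div_le_self hnR.le hM)
    exact_mod_cast this
  have hkM : (k:ℝ) ≤ n / M := Nat.floor_le (by positivity)
  have hkM' : (n:ℝ) / M < k + 1 := Nat.lt_floor_add_one _
  have hH : ∀ m : ℕ, ((harmonic m : ℚ) : ℝ) = ∑ j ∈ Finset.Icc 1 m, (1:ℝ) / j := by
    intro m; rw [harmonic_eq_sum_Icc]; push_cast; simp
  have hdisj : Finset.Icc 1 n = Finset.Icc 1 k ∪ Finset.Ioc k n := by
    ext x; simp only [Finset.mem_union, Finset.mem_Icc, Finset.mem_Ioc]; omega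
  have hd : Disjoint (Finset.Icc 1 k) (Finset.Ioc k n) := by
    rw [Finset.disjoint_left]; intro x; simp only [Finset.mem_Icc, Finset.mem_Ioc]; omega
  have h1 : ∑ j ∈ Finset.Ioc k n, (1:ℝ) / j ≤ 1 + Real.log M := by
    have e1 := harmonic_le_one_add_log n
    have e2 := log_add_one_le_harmonic k
    rw [hH, hdisj, Finset.sum_union hd] at e1
    rw [hH] at e2
    have e3 : Real.log n - Real.log M ≤ Real.log ((k + 1 : ℕ) : ℝ) := by
      rw [← Real.log_div hnR.ne' (by positivity)]
      apply Real.log_le_log (by positivity)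
      push_cast; exact hkM'.le
    linarith
  rw [hdisj, Finset.sum_union hd]
  have h2 : ∑ j ∈ Finset.Icc 1 k, min r (a * n * r / j) ≤ k * r := by
    refine (Finset.sum_le_sum (fun j _ => min_le_left _ _)).trans ?_
    simp
  have h3 : ∑ j ∈ Finset.Ioc k n, min r (a * n * r / j) ≤ a * n * r * (1 + Real.log M) := by
    refine (Finset.sum_le_sum (fun j _ => min_le_right _ _)).trans ?_
    calc ∑ j ∈ Finset.Ioc k n, a * n * r / j = a * n * r * ∑ j ∈ Finset.Ioc k n, (1:ℝ) / j := by
          rw [Finset.mul_sum]; refine Finset.sum_congr rfl (fun j _ => by ring)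
      _ ≤ _ := mul_le_mul_of_nonneg_left h1 (by positivity)
  have h4 : (k:ℝ) * r ≤ n / M * r := mul_le_mul_of_nonneg_right hkM hr
  calc _ ≤ n / M * r + a * n * r * (1 + Real.log M) := by linarith
    _ = _ := by ring

lemma harm_eq (m : ℕ) : ((harmonic m : ℚ) : ℝ) = ∑ j ∈ Finset.Icc 1 m, (1:ℝ) / j := by
  rw [harmonic_eq_sum_Icc]; push_cast; simp

lemma sum_tau (N : ℕ) : ∑ r ∈ Finset.Icc 1 N, ((Nat.divisors r).card : ℝ) / r ≤ (1 + Real.log N) ^ 2 := by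
  have h1 : ∑ r ∈ Finset.Icc 1 N, ((Nat.divisors r).card : ℝ) / r
      = ∑ r ∈ Finset.Icc 1 N, ∑ d ∈ Nat.divisors r, ((1:ℝ) / d) * (1 / ((r / d : ℕ) : ℝ)) := by
    refine Finset.sum_congr rfl (fun r hr => ?_)
    have hr1 := (Finset.mem_Icc.mp hr).1
    have : ∀ d ∈ Nat.divisors r, ((1:ℝ) / d) * (1 / ((r / d : ℕ) : ℝ)) = 1 / r := by
      intro d hd
      have hdr := Nat.dvd_of_mem_divisors hd
      have e : (r:ℝ) = d * ((r / d : ℕ) : ℝ) := by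
        rw [← Nat.cast_mul, Nat.mul_div_cancel' hdr]
      rw [one_div_mul_one_div, ← e]
    rw [Finset.sum_congr rfl this, Finset.sum_const, nsmul_eq_mul]
    ring
  have h2 : ∑ r ∈ Finset.Icc 1 N, ∑ d ∈ Nat.divisors r, ((1:ℝ) / d) * (1 / ((r / d : ℕ) : ℝ))
      ≤ ∑ p ∈ Finset.Icc 1 N ×ˢ Finset.Icc 1 N, ((1:ℝ) / p.1) * (1 / (p.2 : ℝ)) := by
    rw [Finset.sum_sigma']
    have hinj : Set.InjOn (fun x : (_ : ℕ) × ℕ => (x.2, x.1 / x.2)) ((Finset.Icc 1 N).sigma fun r => Nat.divisors r) := by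
      rintro ⟨r, d⟩ h1 ⟨r', d'⟩ h2 h
      simp only [Finset.coe_sigma, Set.mem_sigma_iff, Finset.mem_coe] at h1 h2
      simp only [Prod.mk.injEq] at h
      have e1 := Nat.mul_div_cancel' (Nat.dvd_of_mem_divisors h1.2)
      have e2 := Nat.mul_div_cancel' (Nat.dvd_of_mem_divisors h2.2)
      obtain ⟨h3, h4⟩ := h
      subst h3
      rw [h4, e2] at e1
      subst e1; rfl
    rw [← Finset.sum_image (g := fun x : (_ : ℕ) × ℕ => (x.2, x.1 / x.2))
      (f := fun p : ℕ × ℕ => ((1:ℝ) / p.1) * (1 / (p.2 : ℝ))) hinj]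
    apply Finset.sum_le_sum_of_subset_of_nonneg
    · intro p hp
      obtain ⟨⟨r, d⟩, hx, rfl⟩ := Finset.mem_image.mp hp
      rw [Finset.mem_sigma] at hx
      simp only at hx
      have hr := Finset.mem_Icc.mp hx.1
      have hdr := Nat.dvd_of_mem_divisors hx.2
      have hd0 := Nat.pos_of_mem_divisors hx.2
      have hdle := Nat.le_of_dvd (by omega) hdr
      simp only [Finset.mem_product, Finset.mem_Icc]
      exact ⟨⟨hd0, hdle.trans hr.2⟩, Nat.div_pos hdle hd0, (Nat.div_le_self _ _).trans hr.2⟩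
    · intro p _ _; positivity
  have h3 := harmonic_le_one_add_log N
  rw [harm_eq] at h3
  rw [h1]
  refine h2.trans ?_
  rw [Finset.sum_product]
  dsimp only
  rw [← Finset.sum_mul_sum, ← sq]
  exact pow_le_pow_left₀ (Finset.sum_nonneg (fun _ _ => by positivity)) h3 2

lemma sum_inv_div (r : ℕ) (M : ℝ) (hM : 1 ≤ M) :
    ∑ d ∈ Nat.divisors r, (1:ℝ) / d ≤ (1 + Real.log M) + (Nat.divisors r).card / M := by
  classical
  rw [← Finset.sum_filter_add_sum_filter_not (Nat.divisors r) (fun d => d ≤ ⌊M⌋₊)]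
  apply add_le_add
  · have h3 := harmonic_le_one_add_log ⌊M⌋₊
    rw [harm_eq] at h3
    have h4 : Real.log ⌊M⌋₊ ≤ Real.log M := by
      apply Real.log_le_log
      · exact_mod_cast Nat.floor_pos.mpr hM
      · exact Nat.floor_le (by linarith)
    refine le_trans (Finset.sum_le_sum_of_subset_of_nonneg ?_ (fun _ _ _ => by positivity)) (h3.trans (by linarith))
    intro d hd
    obtain ⟨h5, h6⟩ := Finset.mem_filter.mp hd
    exact Finset.mem_Icc.mpr ⟨Nat.pos_of_mem_divisors h5, h6⟩
  · have : ∀ d ∈ (Nat.divisors r).filter (fun d => ¬ d ≤ ⌊M⌋₊), (1:ℝ) / d ≤ 1 / M := by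
      intro d hd
      obtain ⟨h5, h6⟩ := Finset.mem_filter.mp hd
      have : M < d := (Nat.floor_lt (by linarith)).mp (not_le.mp h6)
      gcongr
    refine (Finset.sum_le_sum this).trans ?_
    rw [Finset.sum_const, nsmul_eq_mul, mul_one_div]
    gcongr
    exact Finset.filter_subset _ _

open Classical in
lemma err_r (γ : ℝ) (ψ : ℕ → ℝ) (n Q N : ℕ) (hn : 0 < n) (c : ℤ)
    (hcop : IsCoprime c (n:ℤ)) (C L M : ℝ) (hC : 0 < C) (hL : 1 ≤ L) (hM : 1 ≤ M)
    (hψ : ∀ q, Q ≤ q → ψ q ≤ C / (q * L ^ 2)) (hQ1 : 0 < Q)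
    (hQ : 4 * C * n ^ 5 ≤ Q) (hδ : N * (|n * γ - c| / n) ≤ 2 * C / (N * L ^ 2))
    (hMn : M ≤ n) (hML : 1 + Real.log M ≤ 5 * L) (r : ℕ) (hQr : Q ≤ r) (hrN : r ≤ N) :
    ∑ q ∈ (Finset.Ico Q r).filter (fun q => (EE γ (ψ q) q ∩ EE γ (ψ r) r).Nonempty),
      (Nat.gcd q r : ℝ) / r ≤ 200 * C + (5 + 40 * C) * (Nat.divisors r).card / M := by
  have hnR : (0:ℝ) < n := by exact_mod_cast hn
  have hr0 : 0 < r := by omega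
  have hrR : (0:ℝ) < r := by exact_mod_cast hr0
  have hN0 : (0:ℝ) < N := by exact_mod_cast (by omega : 0 < N)
  have hM0 : 0 < M := by linarith
  set F := (Finset.Ico Q r).filter (fun q => (EE γ (ψ q) q ∩ EE γ (ψ r) r).Nonempty) with hF
  have hmap : ∀ q ∈ F, Nat.gcd q r ∈ Nat.divisors r := fun q _ =>
    Nat.mem_divisors.mpr ⟨Nat.gcd_dvd_right _ _, hr0.ne'⟩
  have key : ∀ d ∈ Nat.divisors r, ∑ q ∈ F.filter (fun q => Nat.gcd q r = d), (Nat.gcd q r : ℝ) / r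
      ≤ 5 / M + 40 * C / L * (1 / d) := by
    intro d hd
    have hdr := Nat.dvd_of_mem_divisors hd
    have hd0 := Nat.pos_of_mem_divisors hd
    have hdR : (0:ℝ) < d := by exact_mod_cast hd0
    obtain ⟨r', hr'⟩ := hdr
    have hr'0 : 0 < r' := by
      rcases Nat.eq_zero_or_pos r' with h | h
      · subst h; omega
      · exact h
    have hr'R : (0:ℝ) < r' := by exact_mod_cast hr'0
    have hrdr : (r:ℝ) = d * r' := by rw [hr']; push_cast; ring
    have hr'N : (r':ℝ) ≤ N := by
      have : r' ≤ r := by rw [hr']; exact Nat.le_mul_of_pos_left _ hd0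
      exact_mod_cast this.trans hrN
    have hdN : (d:ℝ) ≤ N := by
      have : d ≤ r := by rw [hr']; exact Nat.le_mul_of_pos_right _ hr'0
      exact_mod_cast this.trans hrN
    set G := F.filter (fun q => Nat.gcd q r = d) with hG
    have hGd : ∀ q ∈ G, d * (q / d) = q := by
      intro q hq
      have := (Finset.mem_filter.mp hq).2
      exact Nat.mul_div_cancel' (this ▸ Nat.gcd_dvd_left q r)
    set s := G.image (fun q => q / d) with hs
    have hcard : s.card = G.card := by
      apply Finset.card_image_of_injOn
      intro q hq p hp h
      simp only at h
      rw [← hGd q hq, ← hGd p hp, h]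
    set Y := 2 * C * r' / (d * L ^ 2) with hY
    have hY0 : 0 < Y := by positivity
    set a := 4 * C / (d * L ^ 2) with ha
    have hcount := count_bad γ n hn c hcop r' hr'0 Y hY0 (by
        calc r' * (|n * γ - c| / n) ≤ N * (|n * γ - c| / n) := by gcongr
          _ ≤ 2 * C / (N * L ^ 2) := hδ
          _ ≤ 2 * C / (d * L ^ 2) := by gcongr
          _ = Y / r' := by rw [hY]; field_simp)
      (by
        intro h
        have h1 : 2 * Y * n = 4 * C * n * r' / (d * L ^ 2) := by rw [hY]; ring
        rw [h1, lt_div_iff₀ (by positivity), one_mul] at h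
        have h2 : (d:ℝ) ≤ d * L ^ 2 := le_mul_of_one_le_right hdR.le (one_le_pow₀ hL)
        have h3 : (Q:ℝ) ≤ d * r' := by rw [← hrdr]; exact_mod_cast hQr
        have h4 : (d:ℝ) * r' < 4 * C * n * r' * r' := mul_lt_mul_of_pos_right (by linarith) hr'R
        have h5 : 4 * C * n * ((n:ℝ) ^ 2) ^ 2 < 4 * C * n * (r':ℝ) ^ 2 := by
          calc 4 * C * n * ((n:ℝ) ^ 2) ^ 2 = 4 * C * n ^ 5 := by ring
            _ < 4 * C * n * r' * r' := by linarith
            _ = _ := by ring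
        have h6 := lt_of_mul_lt_mul_left h5 (by positivity)
        have h7 := lt_of_pow_lt_pow_left₀ 2 hr'R.le h6
        exact_mod_cast h7.le) s
      (by
        intro q' hq'
        obtain ⟨q, hq, rfl⟩ := Finset.mem_image.mp hq'
        have hqd := hGd q hq
        obtain ⟨hqI, hne⟩ := Finset.mem_filter.mp (Finset.mem_filter.mp hq).1
        have hI := Finset.mem_Ico.mp hqI
        set q' := q / d
        have hq'0 : 0 < q' := by
          rcases Nat.eq_zero_or_pos q' with h | h
          · rw [h] at hqd; omega
          · exact h
        have hq'R : (0:ℝ) < q' := by exact_mod_cast hq'0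
        have hlt : q' < r' := by
          apply lt_of_mul_lt_mul_left (a := d) _ (Nat.zero_le _)
          rw [hqd, ← hr']; exact hI.2
        have hltR : (q':ℝ) ≤ r' := by exact_mod_cast hlt.le
        have h1 := EE_nonempty γ (ψ q) (ψ r) q r d q' r' hqd.symm hr' hr'0 hne
        rw [UnitAddCircle.norm_eq] at h1
        refine ⟨hq'0, hlt, round (((r':ℝ) - q') * γ), h1.trans_le ?_⟩
        have e1 := hψ q hI.1
        have e2 := hψ r hQr
        have hqR : (q:ℝ) = d * q' := by rw [← hqd]; push_cast; ring
        rw [hqR] at e1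
        rw [hrdr] at e2
        have e3 : (r':ℝ) * ψ q ≤ r' * (C / (d * q' * L ^ 2)) := mul_le_mul_of_nonneg_left e1 hr'R.le
        have e4 : (q':ℝ) * ψ r ≤ r' * (C / (d * q' * L ^ 2)) := by
          calc (q':ℝ) * ψ r ≤ q' * (C / (d * r' * L ^ 2)) := mul_le_mul_of_nonneg_left e2 hq'R.le
            _ ≤ r' * (C / (d * q' * L ^ 2)) := by gcongr
        have e5 : Y / q' = r' * (C / (d * q' * L ^ 2)) + r' * (C / (d * q' * L ^ 2)) := by
          rw [hY]; field_simp; ring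
        linarith)
    have hsm := sum_min_le n hn M a hM (by positivity) r' hr'R.le
    have hYa : 2 * Y * n = a * n * r' := by rw [hY, ha]; ring
    rw [hYa] at hcount
    have h6 : (s.card : ℝ) ≤ r' * (5 / M + 40 * C / L * (1 / d)) := by
      calc (s.card : ℝ) ≤ 3 * (r' / n) + 2 / n * (r' * n * (1 / M + a * (1 + Real.log M))) := by
            refine hcount.trans ?_
            gcongr
        _ = 3 * (r' / n) + r' * (2 / M) + 2 * r' * a * (1 + Real.log M) := by field_simp; ring
        _ ≤ 3 * (r' / M) + r' * (2 / M) + 2 * r' * a * (5 * L) := by gcongr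
        _ = _ := by rw [ha]; field_simp; ring
    have h7 : ∑ q ∈ G, (Nat.gcd q r : ℝ) / r = s.card * (d / r) := by
      rw [Finset.sum_congr rfl (fun q hq => by rw [(Finset.mem_filter.mp hq).2]), Finset.sum_const,
        nsmul_eq_mul, hcard]
    rw [h7, hrdr]
    calc (s.card : ℝ) * (d / (d * r')) = s.card / r' := by field_simp
      _ ≤ _ := by rw [div_le_iff₀ hr'R]; linarith
  rw [← Finset.sum_fiberwise_of_maps_to hmap]
  refine (Finset.sum_le_sum key).trans ?_
  rw [Finset.sum_add_distrib, ← Finset.mul_sum, Finset.sum_const, nsmul_eq_mul]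
  have h8 := sum_inv_div r M hM
  set τ := ((Nat.divisors r).card : ℝ)
  have hτ : 0 ≤ τ := by positivity
  have hL0 : 0 < L := by linarith
  calc τ * (5 / M) + 40 * C / L * ∑ d ∈ Nat.divisors r, (1:ℝ) / d
      ≤ τ * (5 / M) + 40 * C / L * (5 * L + τ / M) := by gcongr; linarith
    _ = τ * (5 / M) + 200 * C + 40 * C / L * (τ / M) := by field_simp; ring
    _ ≤ τ * (5 / M) + 200 * C + 40 * C / 1 * (τ / M) := by gcongr
    _ = _ := by ring

lemma window (γ : ℝ) (ψ : ℕ → ℝ) (hψ0 : ∀ q, 0 ≤ ψ q) (hψhalf : ∀ q, 1 ≤ q → ψ q < 1/2)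
    (n Q N : ℕ) (hn : 0 < n) (c : ℤ)
    (hcop : IsCoprime c (n:ℤ)) (C L M : ℝ) (hC : 0 < C) (hL : 1 ≤ L) (hM : 1 ≤ M)
    (hψ : ∀ q, Q ≤ q → ψ q ≤ C / (q * L ^ 2)) (hQ1 : 0 < Q)
    (hQ : 4 * C * n ^ 5 ≤ Q) (hδ : N * (|n * γ - c| / n) ≤ 2 * C / (N * L ^ 2))
    (hMn : M ≤ n) (hML : 1 + Real.log M ≤ 5 * L) (hNM : (1 + Real.log N) ^ 2 ≤ M) :
    volume.real (⋃ q ∈ Finset.Icc Q N, EE γ (ψ q) q)ᶜ * (2 * ∑ q ∈ Finset.Icc Q N, ψ q) ^ 2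
      ≤ (800 * C + 2) * ∑ q ∈ Finset.Icc Q N, ψ q + 4 * C * (5 + 40 * C) := by
  classical
  set W := Finset.Icc Q N with hW
  set S := ∑ q ∈ W, ψ q with hS
  have hW1 : ∀ q ∈ W, 0 < q := fun q hq => by
    have := (Finset.mem_Icc.mp hq).1; omega
  have hL2 : 1 ≤ L ^ 2 := one_le_pow₀ hL
  have hM0 : 0 < M := by linarith
  let h : ℕ → ℕ → ℝ := fun q r =>
    if q < r ∧ (EE γ (ψ q) q ∩ EE γ (ψ r) r).Nonempty then 2 * ψ r * ((Nat.gcd q r : ℝ) / r) else 0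
  have hh0 : ∀ q r, 0 ≤ h q r := by
    intro q r
    simp only [h]
    split_ifs
    · have := hψ0 r; positivity
    · exact le_rfl
  have hlt : ∀ q r, q ∈ W → r ∈ W → q < r →
      volume.real (EE γ (ψ q) q ∩ EE γ (ψ r) r) ≤ 4 * ψ q * ψ r + h q r := by
    intro q r hq hr hqr
    by_cases hne : (EE γ (ψ q) q ∩ EE γ (ψ r) r).Nonempty
    · have h1 := EE_inter γ (ψ r) (ψ q) (hψ0 r) (hψhalf r (hW1 r hr)).le (hψ0 q) r q (hW1 r hr) (hW1 q hq)
      rw [Set.inter_comm, Nat.gcd_comm] at h1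
      simp only [h, hqr, hne, and_self, if_true]
      linarith
    · rw [Set.not_nonempty_iff_eq_empty.mp hne]
      have := hψ0 q
      have := hψ0 r
      have := hh0 q r
      simp only [measureReal_empty]
      positivity
  have hpt : ∀ q ∈ W, ∀ r ∈ W, volume.real (EE γ (ψ q) q ∩ EE γ (ψ r) r)
      ≤ (2 * ψ q) * (2 * ψ r) + h q r + h r q + (if q = r then 2 * ψ q else 0) := by
    intro q hq r hr
    have p1 := hh0 q r
    have p2 := hh0 r q
    have p3 := mul_nonneg (hψ0 q) (hψ0 r)
    rcases lt_trichotomy q r with h1 | h1 | h1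
    · have := hlt q r hq hr h1
      rw [if_neg h1.ne]; linarith
    · subst h1
      rw [Set.inter_self, if_pos rfl]
      have : volume.real (EE γ (ψ q) q) = 2 * ψ q := by
        rw [measureReal_def, EE_vol γ _ (hψ0 q) (hψhalf q (hW1 q hq)).le q (hW1 q hq),
          ENNReal.toReal_ofReal (by linarith [hψ0 q])]
      linarith
    · have := hlt r q hr hq h1
      rw [Set.inter_comm] at this
      rw [if_neg h1.ne']; linarith
  have hE : ∑ r ∈ W, ∑ q ∈ W, h q r ≤ 400 * C * S + 2 * C * (5 + 40 * C) := by
    have h1 : ∀ r ∈ W, ∑ q ∈ W, h q r ≤ 400 * C * ψ r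
        + 2 * (5 + 40 * C) / M * (C * ((Nat.divisors r).card / r)) := by
      intro r hr
      have hI := Finset.mem_Icc.mp hr
      have hr0 : (0:ℝ) < r := by exact_mod_cast hW1 r hr
      have e1 := err_r γ ψ n Q N hn c hcop C L M hC hL hM hψ hQ1 hQ hδ hMn hML r hI.1 hI.2
      have e2 : ∑ q ∈ W, h q r = 2 * ψ r * ∑ q ∈ (Finset.Ico Q r).filter (fun q => (EE γ (ψ q) q ∩ EE γ (ψ r) r).Nonempty),
          (Nat.gcd q r : ℝ) / r := by
        rw [Finset.mul_sum]
        simp only [h]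
        rw [← Finset.sum_filter]
        apply Finset.sum_congr _ (fun _ _ => rfl)
        ext q
        simp only [hW, Finset.mem_filter, Finset.mem_Icc, Finset.mem_Ico]
        constructor
        · rintro ⟨⟨a1, a2⟩, a3, a4⟩; exact ⟨⟨a1, a3⟩, a4⟩
        · rintro ⟨⟨a1, a3⟩, a4⟩; exact ⟨⟨a1, by omega⟩, a3, a4⟩
      rw [e2]
      set τ := ((Nat.divisors r).card : ℝ)
      have hτ : 0 ≤ τ := by positivity
      have e3 : ψ r ≤ C / r := (hψ r hI.1).trans (by
        gcongr
        exact le_mul_of_one_le_right hr0.le hL2)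
      have := hψ0 r
      calc 2 * ψ r * _ ≤ 2 * ψ r * (200 * C + (5 + 40 * C) * τ / M) :=
            mul_le_mul_of_nonneg_left e1 (by positivity)
        _ = 400 * C * ψ r + 2 * (5 + 40 * C) / M * (ψ r * τ) := by ring
        _ ≤ 400 * C * ψ r + 2 * (5 + 40 * C) / M * (C / r * τ) := by gcongr
        _ = _ := by ring
    refine (Finset.sum_le_sum h1).trans ?_
    rw [Finset.sum_add_distrib, ← Finset.mul_sum, ← Finset.mul_sum, ← Finset.mul_sum]
    have e4 : ∑ r ∈ W, ((Nat.divisors r).card : ℝ) / r ≤ M := by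
      refine le_trans (Finset.sum_le_sum_of_subset_of_nonneg ?_ (fun _ _ _ => by positivity)) ((sum_tau N).trans hNM)
      exact Finset.Icc_subset_Icc_left hQ1
    have e5 : 2 * (5 + 40 * C) / M * (C * ∑ r ∈ W, ((Nat.divisors r).card : ℝ) / r)
        ≤ 2 * (5 + 40 * C) / M * (C * M) := by gcongr
    have e6 : 2 * (5 + 40 * C) / M * (C * M) = 2 * C * (5 + 40 * C) := by field_simp
    linarith
  apply second_moment volume (by simp) W (fun q => EE γ (ψ q) q)
    (fun q => (EE_isOpen _ _ _).measurableSet)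
  · rw [hS, Finset.mul_sum]
    refine Finset.sum_congr rfl (fun q hq => ?_)
    rw [measureReal_def, EE_vol γ _ (hψ0 q) (hψhalf q (hW1 q hq)).le q (hW1 q hq),
          ENNReal.toReal_ofReal (by linarith [hψ0 q])]
  · refine (Finset.sum_le_sum (fun q hq => Finset.sum_le_sum (fun r hr => hpt q hq r hr))).trans ?_
    simp only [Finset.sum_add_distrib]
    have f1 : ∑ q ∈ W, ∑ r ∈ W, (2 * ψ q) * (2 * ψ r) = (2 * S) ^ 2 := by
      rw [← Finset.sum_mul_sum, ← Finset.mul_sum, sq]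
    have f2 : ∑ q ∈ W, ∑ r ∈ W, (if q = r then 2 * ψ q else 0) = 2 * S := by
      rw [hS, Finset.mul_sum]
      refine Finset.sum_congr rfl (fun q hq => ?_)
      rw [Finset.sum_ite_eq, if_pos hq]
    have f3 : ∑ q ∈ W, ∑ r ∈ W, h q r = ∑ r ∈ W, ∑ q ∈ W, h q r := Finset.sum_comm
    rw [f1, f2, f3]
    linarith

lemma asym (C : ℝ) (hC : 0 < C) : ∃ n1 : ℕ, ∀ n : ℕ, n1 ≤ n →
    3 ≤ n ∧ 4 * C ≤ n ∧ 4 ≤ Real.logb 2 n ∧ 1 / (2 * C) ≤ Real.logb 2 n ∧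
    (6 * Real.logb 2 n) ^ 4 ≤ n ∧
    12 * (6 * Real.logb 2 n) ^ ((1:ℝ)/8) ≤ (Real.logb 2 n) ^ ((1:ℝ)/5) := by
  have hlog : Tendsto (fun n : ℕ => Real.log (n:ℝ)) atTop atTop :=
    Real.tendsto_log_atTop.comp tendsto_natCast_atTop_atTop
  have hx : Tendsto (fun n : ℕ => Real.logb 2 (n:ℝ)) atTop atTop :=
    (Real.tendsto_logb_atTop (by norm_num)).comp tendsto_natCast_atTop_atTop
  have e1 : ∀ᶠ n : ℕ in atTop, (6 * Real.logb 2 n) ^ 4 ≤ n := by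
    have h := hlog.eventually ((Real.tendsto_pow_mul_exp_neg_atTop_nhds_zero 4).eventually
      (gt_mem_nhds (show (0:ℝ) < 1 / 12 ^ 4 by norm_num)))
    filter_upwards [h, eventually_ge_atTop 1] with n hn hn1
    have hnR : (0:ℝ) < n := by exact_mod_cast hn1
    have hn1R : (1:ℝ) ≤ n := by exact_mod_cast hn1
    rw [Real.exp_neg, Real.exp_log hnR] at hn
    have hl0 : 0 ≤ Real.log n := Real.log_nonneg hn1R
    have h2 : Real.logb 2 n ≤ 2 * Real.log n := by
      rw [Real.logb, div_le_iff₀ (Real.log_pos (by norm_num))]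
      have := Real.log_two_gt_d9
      nlinarith
    have h3 : 0 ≤ Real.logb 2 n := Real.logb_nonneg (by norm_num) hn1R
    calc (6 * Real.logb 2 n) ^ 4 ≤ (6 * (2 * Real.log n)) ^ 4 := by gcongr
      _ = 12 ^ 4 * (Real.log n ^ 4 * (n:ℝ)⁻¹) * n := by field_simp; ring
      _ ≤ 12 ^ 4 * (1 / 12 ^ 4) * n := by gcongr
      _ = n := by norm_num
  have e2 : ∀ᶠ n : ℕ in atTop,
      12 * (6 * Real.logb 2 n) ^ ((1:ℝ)/8) ≤ (Real.logb 2 n) ^ ((1:ℝ)/5) := by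
    have h := hx.eventually ((tendsto_rpow_atTop (show (0:ℝ) < 3/40 by norm_num)).eventually
      (eventually_ge_atTop (72:ℝ)))
    filter_upwards [h, hx.eventually (eventually_ge_atTop (1:ℝ))] with n hn hn1
    set x := Real.logb 2 n
    have h6 : (6:ℝ) ^ ((1:ℝ)/8) ≤ 6 := by
      calc (6:ℝ) ^ ((1:ℝ)/8) ≤ (6:ℝ) ^ (1:ℝ) :=
            Real.rpow_le_rpow_of_exponent_le (by norm_num) (by norm_num)
        _ = 6 := Real.rpow_one 6
    rw [Real.mul_rpow (by norm_num) (by linarith)]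
    have h7 : x ^ ((1:ℝ)/5) = x ^ ((3:ℝ)/40) * x ^ ((1:ℝ)/8) := by
      rw [← Real.rpow_add (by linarith)]; norm_num
    rw [h7]
    have h8 : 0 ≤ x ^ ((1:ℝ)/8) := by positivity
    nlinarith
  have e3 : ∀ᶠ n : ℕ in atTop, 4 * C ≤ (n:ℝ) :=
    tendsto_natCast_atTop_atTop.eventually (eventually_ge_atTop (4 * C))
  obtain ⟨n1, h⟩ := eventually_atTop.mp ((eventually_ge_atTop 3).and (e3.and
    ((hx.eventually (eventually_ge_atTop (4:ℝ))).and
    ((hx.eventually (eventually_ge_atTop (1/(2*C)))).and (e1.and e2)))))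
  exact ⟨n1, h⟩

lemma main_window (ψ : ℕ → ℝ) (hψ0 : ∀ q, 0 ≤ ψ q)
    (hψhalf : ∀ q, 1 ≤ q → ψ q < 1/2)
    (C : ℝ) (hC : 0 < C) (hO : ∀ q : ℕ, 3 ≤ q →
      ψ q ≤ C / ((q : ℝ) * (Real.logb 2 (Real.logb 2 q)) ^ 2)) (γ : ℝ)
    (n : ℕ) (hn : 3 ≤ n ∧ 4 * C ≤ n ∧ 4 ≤ Real.logb 2 n ∧ 1 / (2 * C) ≤ Real.logb 2 n ∧
    (6 * Real.logb 2 n) ^ 4 ≤ n ∧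
    12 * (6 * Real.logb 2 n) ^ ((1:ℝ)/8) ≤ (Real.logb 2 n) ^ ((1:ℝ)/5))
    (c : ℤ) (hcop : IsCoprime c (n:ℤ))
    (hc : |n * γ - c| ≤ (n:ℝ) ^ (-(Real.logb 2 n) ^ ((1:ℝ)/5)))
    (Q N : ℕ) (hQ : Q = n ^ 6) (hN : N = ⌊(Q:ℝ) ^ ((Real.logb 2 Q) ^ ((1:ℝ)/8))⌋₊) :
    volume.real (⋃ q ∈ Finset.Icc Q N, EE γ (ψ q) q)ᶜ * (2 * ∑ q ∈ Finset.Icc Q N, ψ q) ^ 2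
      ≤ (800 * C + 2) * ∑ q ∈ Finset.Icc Q N, ψ q + 4 * C * (5 + 40 * C) := by
  obtain ⟨hn3, hn4, hx4, hxC, hx6, hx12⟩ := hn
  set x := Real.logb 2 n with hx
  have hn3R : (3:ℝ) ≤ n := by exact_mod_cast hn3
  have hnR : (0:ℝ) < n := by linarith
  have hn2 : (n:ℝ) = 2 ^ x := (Real.rpow_logb (by norm_num) (by norm_num) hnR).symm
  have hQR : (Q:ℝ) = (n:ℝ) ^ 6 := by rw [hQ]; push_cast; ring
  have hlQ : Real.logb 2 Q = 6 * x := by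
    rw [hQR, Real.logb_pow]; push_cast; ring
  have hQ0 : (0:ℝ) < Q := by rw [hQR]; positivity
  have hQ2 : (Q:ℝ) = 2 ^ (6 * x) := by
    rw [← hlQ, Real.rpow_logb (by norm_num) (by norm_num) hQ0]
  set ℓ := 6 * x with hℓ
  have hℓ24 : 24 ≤ ℓ := by linarith
  have hℓ0 : 0 < ℓ := by linarith
  have hQn : n ≤ Q := by rw [hQ]; exact Nat.le_self_pow (by norm_num) n
  set L := Real.logb 2 ℓ with hLdef
  have hL1 : 1 ≤ L := by
    rw [hLdef, Real.le_logb_iff_rpow_le (by norm_num) hℓ0]; norm_num; linarith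
  have hlogL : Real.log ℓ ≤ L := by
    rw [hLdef, Real.logb, le_div_iff₀ (Real.log_pos (by norm_num))]
    have := Real.log_two_lt_d9
    have : 0 ≤ Real.log ℓ := Real.log_nonneg (by linarith)
    nlinarith
  have hLℓ : L ≤ ℓ := by
    rw [hLdef, Real.logb_le_iff_le_rpow (by norm_num) hℓ0, ← hQ2, hQR]
    calc ℓ ≤ ℓ ^ 4 := le_self_pow₀ (by linarith) (by norm_num)
      _ ≤ n := hx6
      _ ≤ (n:ℝ) ^ 6 := le_self_pow₀ (by linarith) (by norm_num)
  have hp0 : 0 < ℓ ^ ((1:ℝ)/8) := by positivity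
  rw [hlQ, hQ2, ← Real.rpow_mul (by norm_num)] at hN
  have hNle : (N:ℝ) ≤ 2 ^ (ℓ * ℓ ^ ((1:ℝ)/8)) := by
    rw [hN]; exact Nat.floor_le (by positivity)
  have hN1 : 1 ≤ N := by
    rw [hN, Nat.one_le_floor_iff]
    exact Real.one_le_rpow (by norm_num) (by positivity)
  have hN1R : (1:ℝ) ≤ N := by exact_mod_cast hN1
  have hδ0 : 0 ≤ |n * γ - c| := abs_nonneg _
  apply window γ ψ hψ0 hψhalf n Q N (by omega) c hcop C L (ℓ ^ 4) hC hL1 (one_le_pow₀ (by linarith))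
  · intro q hq
    have hqR : (Q:ℝ) ≤ q := by exact_mod_cast hq
    refine (hO q (by omega)).trans ?_
    have h1 : ℓ ≤ Real.logb 2 q := by
      rw [← hlQ]; exact Real.logb_le_logb_of_le (by norm_num) hQ0 hqR
    have h2 : L ≤ Real.logb 2 (Real.logb 2 q) := Real.logb_le_logb_of_le (by norm_num) hℓ0 h1
    have : (0:ℝ) < q := by linarith
    gcongr
  · omega
  · rw [hQR]
    calc 4 * C * (n:ℝ) ^ 5 ≤ n * (n:ℝ) ^ 5 := by gcongr
      _ = _ := by ring
  · have h1 : (N:ℝ) ^ 2 * |n * γ - c| ≤ 1 := by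
      calc (N:ℝ) ^ 2 * |n * γ - c|
          ≤ ((2:ℝ) ^ (ℓ * ℓ ^ ((1:ℝ)/8))) ^ 2 * (n:ℝ) ^ (-x ^ ((1:ℝ)/5)) := by gcongr
        _ = (2:ℝ) ^ (ℓ * ℓ ^ ((1:ℝ)/8) * 2 + x * (-x ^ ((1:ℝ)/5))) := by
            rw [Real.rpow_add (by norm_num), Real.rpow_mul (by norm_num) (ℓ * ℓ ^ ((1:ℝ)/8)) 2, Real.rpow_mul (by norm_num) x, ← hn2]
            norm_num
        _ ≤ (2:ℝ) ^ (0:ℝ) := by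
            apply Real.rpow_le_rpow_of_exponent_le (by norm_num)
            have : ℓ * ℓ ^ ((1:ℝ)/8) * 2 + x * (-x ^ ((1:ℝ)/5)) = x * (12 * ℓ ^ ((1:ℝ)/8) - x ^ ((1:ℝ)/5)) := by
              rw [hℓ]; ring
            rw [this]
            exact mul_nonpos_of_nonneg_of_nonpos (by linarith) (by linarith)
        _ = 1 := Real.rpow_zero 2
    have h2 : L ^ 2 ≤ 2 * C * n := by
      have h3 : 1 ≤ 2 * C * ℓ ^ 2 := by
        rw [div_le_iff₀ (by positivity)] at hxC
        have : x ≤ ℓ ^ 2 := by nlinarith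
        nlinarith
      calc L ^ 2 ≤ ℓ ^ 2 * 1 := by rw [mul_one]; gcongr
        _ ≤ ℓ ^ 2 * (2 * C * ℓ ^ 2) := by gcongr
        _ = 2 * C * ℓ ^ 4 := by ring
        _ ≤ _ := by gcongr
    have hN0 : (0:ℝ) < N := by linarith
    rw [le_div_iff₀ (by positivity)]
    calc (N:ℝ) * (|n * γ - c| / n) * (N * L ^ 2) = ((N:ℝ) ^ 2 * |n * γ - c|) * L ^ 2 / n := by ring
      _ ≤ 1 * (2 * C * n) / n := by gcongr
      _ = 2 * C := by field_simp
  · exact hx6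
  · rw [Real.log_pow]; push_cast; linarith
  · have h1 : Real.log N ≤ ℓ * ℓ ^ ((1:ℝ)/8) := by
      have h2 := Real.log_le_log (by linarith) hNle
      rw [Real.log_rpow (by norm_num)] at h2
      have := Real.log_two_lt_d9
      have h3 : 0 ≤ ℓ * ℓ ^ ((1:ℝ)/8) := by positivity
      nlinarith
    have h2 : ℓ ^ ((1:ℝ)/8) ≤ ℓ - 1 := by
      have h3 : ℓ ^ ((1:ℝ)/8) ≤ ℓ ^ ((1:ℝ)/2) :=
        Real.rpow_le_rpow_of_exponent_le (by linarith) (by norm_num)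
      rw [← Real.sqrt_eq_rpow] at h3
      refine h3.trans ?_
      rw [Real.sqrt_le_left (by linarith)]
      nlinarith
    have h4 : 1 + Real.log N ≤ ℓ ^ 2 := by nlinarith
    have h5 : 0 ≤ Real.log N := Real.log_nonneg hN1R
    calc (1 + Real.log N) ^ 2 ≤ (ℓ ^ 2) ^ 2 := by gcongr
      _ = ℓ ^ 4 := by ring

lemma ae_tail (ψ : ℕ → ℝ) (hψ0 : ∀ q, 0 ≤ ψ q)
    (hψhalf : ∀ q, 1 ≤ q → ψ q < 1/2)
    (hO : ∃ C > (0:ℝ), ∀ q : ℕ, 3 ≤ q →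
      ψ q ≤ C / ((q : ℝ) * (Real.logb 2 (Real.logb 2 q)) ^ 2))
    (hdiv : WeaklyExtraDivergent ψ)
    (γ : ℝ) (hγ : Irrational γ) (hwild : ¬ TamelyLiouville γ) (k : ℕ) :
    ∀ᵐ x : UnitAddCircle, ∃ q : ℕ, k < q ∧ x ∈ EE γ (ψ q) q := by
  obtain ⟨C, hC, hO⟩ := hO
  rw [ae_iff]
  set V : Set UnitAddCircle := {x | ¬ ∃ q : ℕ, k < q ∧ x ∈ EE γ (ψ q) q} with hV
  obtain ⟨n1, hn1⟩ := asym C hC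
  set K : ℝ := (800 * C + 2) + 4 * C * (5 + 40 * C) with hK
  have hKpos : 0 < K := by positivity
  have key : ∀ B : ℝ, 1 ≤ B → volume.real V * B ≤ K := by
    intro B hB
    obtain ⟨Q1, hQ1⟩ := eventually_atTop.1 (tendsto_atTop.1 hdiv B)
    obtain ⟨n, hn0, hnpos, c, hcop, hc⟩ := wild_approx γ hγ hwild (n1 + Q1 + k + 1)
    have hle : n ≤ n ^ 6 := Nat.le_self_pow (by norm_num) n
    have hS := hQ1 (n ^ 6) (by omega)
    have hw := main_window ψ hψ0 hψhalf C hC hO γ n (hn1 n (by omega)) c hcop hc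
      (n ^ 6) _ rfl rfl
    set N := ⌊((n ^ 6 : ℕ):ℝ) ^ ((Real.logb 2 ((n ^ 6 : ℕ):ℝ)) ^ ((1:ℝ)/8))⌋₊
    set S := ∑ q ∈ Finset.Icc (n ^ 6) N, ψ q
    have hsub : V ⊆ (⋃ q ∈ Finset.Icc (n ^ 6) N, EE γ (ψ q) q)ᶜ := by
      intro x hx hx2
      simp only [Set.mem_iUnion] at hx2
      obtain ⟨q, hq, hxq⟩ := hx2
      have := (Finset.mem_Icc.1 hq).1
      exact hx ⟨q, by omega, hxq⟩
    have hm : volume.real V ≤ volume.real (⋃ q ∈ Finset.Icc (n ^ 6) N, EE γ (ψ q) q)ᶜ :=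
      measureReal_mono hsub
    set v := volume.real (⋃ q ∈ Finset.Icc (n ^ 6) N, EE γ (ψ q) q)ᶜ
    have hv0 : 0 ≤ volume.real V := measureReal_nonneg
    have hBS : B ≤ S := hS
    have hS1 : 1 ≤ S := hB.trans hBS
    have h1 : v * S * S ≤ K * S := by
      have h2 : 0 ≤ v * S ^ 2 := mul_nonneg (hv0.trans hm) (sq_nonneg _)
      have h3 : 0 ≤ 4 * C * (5 + 40 * C) := by positivity
      have h4 := mul_le_mul_of_nonneg_left hS1 h3
      rw [hK]
      nlinarith
    have h5 : v * S ≤ K := le_of_mul_le_mul_right h1 (by linarith)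
    exact (mul_le_mul hm hBS (by linarith) (hv0.trans hm)).trans h5
  have hz : volume.real V = 0 := by
    by_contra hne
    have hpos : 0 < volume.real V := lt_of_le_of_ne measureReal_nonneg (Ne.symm hne)
    have h := key (K / volume.real V + 1) (by have := div_pos hKpos hpos; linarith)
    rw [mul_add, mul_div_cancel₀ _ hne] at h
    linarith
  exact (measureReal_eq_zero_iff (measure_ne_top _ _)).1 hz

theorem stmt1 (ψ : ℕ → ℝ) (hψ0 : ∀ q, 0 ≤ ψ q)
    (hψhalf : ∀ q, 1 ≤ q → ψ q < 1/2)
    (hO : ∃ C > (0:ℝ), ∀ q : ℕ, 3 ≤ q →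
      ψ q ≤ C / ((q : ℝ) * (Real.logb 2 (Real.logb 2 q)) ^ 2))
    (hdiv : WeaklyExtraDivergent ψ)
    (γ : ℝ) (hγ : Irrational γ) (hwild : ¬ TamelyLiouville γ) :
    volume (W ψ γ) = 1 := by
  have h1 : ∀ᵐ x : UnitAddCircle, ∀ k : ℕ, ∃ q : ℕ, k < q ∧ x ∈ EE γ (ψ q) q :=
    ae_all_iff.2 (ae_tail ψ hψ0 hψhalf hO hdiv γ hγ hwild)
  have h2 := (UnitAddCircle.measurePreserving_mk 0).quasiMeasurePreserving.ae h1
  rw [ae_restrict_iff' measurableSet_Ioc] at h2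
  apply le_antisymm
  · calc volume (W ψ γ) ≤ volume (Set.Icc (0:ℝ) 1) := measure_mono (fun x hx => hx.1)
      _ = 1 := by simp
  · calc (1 : ENNReal) = volume (Set.Ioc (0:ℝ) (0 + 1)) := by simp
      _ ≤ volume (W ψ γ) := by
        apply measure_mono_ae
        filter_upwards [h2] with x hx hxI
        have hxI' : x ∈ Set.Ioc (0:ℝ) (0 + 1) := hxI
        refine ⟨⟨hxI'.1.le, by simpa using hxI'.2⟩, ?_⟩
        apply Set.infinite_of_forall_exists_gt
        intro k
        obtain ⟨q, hkq, hq⟩ := hx hxI' k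
        refine ⟨q, ⟨by omega, ?_⟩, hkq⟩
        have hq' : ‖q • (x : UnitAddCircle) - (γ : UnitAddCircle)‖ < ψ q := hq
        rw [← AddCircle.coe_nsmul, ← AddCircle.coe_sub, nsmul_eq_mul, UnitAddCircle.norm_eq] at hq'
        exact hq'
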